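/- There exists a constant C > 0 depending only on Ω, a, b and c such that for every mesh and its finite element solution u_h, the error satisfies the a posteriori bound ‖(u − u_h)'‖_Ω² ≤ C Σ_{i=1}^N h_i² ‖r_h‖_{K_i}², where ‖r_h‖_{K_i}² = ∫_{K_i} |r_h|² dx. -/

import Mathlib

/-!
Setting of Huang–He, "Error analysis for equidistributing meshes":
the boundary value problem  −(a u')' + b u' + c u = f on Ω = (0,1), u(0)=u(1)=0,
its linear finite element discretization on a mesh 0 = x₀ < ⋯ < x_N = 1,
and the residual-based equidistribution quantities.
-/

noncomputable section
open MeasureTheory Real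

namespace EquidMesh

/-- L² norm on (0,1). -/
def L2 (g : ℝ → ℝ) : ℝ := Real.sqrt (∫ t in (0:ℝ)..1, (g t)^2)

/-- L¹ norm on (0,1). -/
def L1 (g : ℝ → ℝ) : ℝ := ∫ t in (0:ℝ)..1, |g t|

/-- The L^{2/3} quasi-norm on (0,1): (∫₀¹ |g|^{2/3})^{3/2}. -/
def Lp23 (g : ℝ → ℝ) : ℝ := (∫ t in (0:ℝ)..1, |g t| ^ ((2:ℝ)/3)) ^ ((3:ℝ)/2)

/-- L^∞ norm (essential supremum of |g|) on (0,1). -/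
def Linf (g : ℝ → ℝ) : ℝ := essSup (fun t => |g t|) (volume.restrict (Set.Ioo (0:ℝ) 1))

/-- Membership in L²(0,1). -/
def MemL2 (g : ℝ → ℝ) : Prop :=
  Measurable g ∧ IntervalIntegrable (fun t => (g t)^2) volume 0 1

/-- Membership in L^∞(0,1). -/
def MemLinf (g : ℝ → ℝ) : Prop :=
  Measurable g ∧ ∃ M : ℝ, ∀ᵐ x ∂(volume.restrict (Set.Ioo (0:ℝ) 1)), |g x| ≤ M

/-- `g` is absolutely continuous on [0,1] with derivative `g' ∈ L¹(0,1)`. -/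
def HasL1Deriv (g g' : ℝ → ℝ) : Prop :=
  Measurable g' ∧ IntervalIntegrable g' volume 0 1 ∧
    ∀ x ∈ Set.Icc (0:ℝ) 1, g x = g 0 + ∫ t in (0:ℝ)..x, g' t

/-- A function in H¹(0,1): absolutely continuous on [0,1], carried together with its
(a.e.) derivative, which lies in L²(0,1). -/
structure H1 where
  val : ℝ → ℝ
  dval : ℝ → ℝ
  dval_meas : Measurable dval
  dval_int : IntervalIntegrable dval volume 0 1
  dval_sq_int : IntervalIntegrable (fun t => (dval t)^2) volume 0 1
  ftc : ∀ x ∈ Set.Icc (0:ℝ) 1, val x = val 0 + ∫ t in (0:ℝ)..x, dval t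

/-- `u ∈ H²(0,1)`: the derivative `u'` is absolutely continuous with `u'' ∈ L²(0,1)`. -/
def H1.IsH2 (u : H1) : Prop :=
  ∃ u'' : ℝ → ℝ, Measurable u'' ∧ IntervalIntegrable u'' volume 0 1 ∧
    IntervalIntegrable (fun t => (u'' t)^2) volume 0 1 ∧
    ∀ x ∈ Set.Icc (0:ℝ) 1, u.dval x = u.dval 0 + ∫ t in (0:ℝ)..x, u'' t

/-- The coefficients of the elliptic problem on Ω = (0,1):
`a, b ∈ W^{1,∞}(Ω)`, `c ∈ L^∞(Ω)`, `a ≥ a₀ > 0`, and `c − b'/2 ≥ 0` a.e. -/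
structure Coeffs where
  a : ℝ → ℝ
  b : ℝ → ℝ
  c : ℝ → ℝ
  a' : ℝ → ℝ
  b' : ℝ → ℝ
  a0 : ℝ
  a0_pos : 0 < a0
  a_lb : ∀ x ∈ Set.Icc (0:ℝ) 1, a0 ≤ a x
  a'_meas : Measurable a'
  b'_meas : Measurable b'
  c_meas : Measurable c
  a'_int : IntervalIntegrable a' volume 0 1
  b'_int : IntervalIntegrable b' volume 0 1
  a'_bdd : ∃ M : ℝ, ∀ᵐ x ∂(volume.restrict (Set.Ioo (0:ℝ) 1)), |a' x| ≤ M
  b'_bdd : ∃ M : ℝ, ∀ᵐ x ∂(volume.restrict (Set.Ioo (0:ℝ) 1)), |b' x| ≤ M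
  c_bdd : ∃ M : ℝ, ∀ᵐ x ∂(volume.restrict (Set.Ioo (0:ℝ) 1)), |c x| ≤ M
  ftc_a : ∀ x ∈ Set.Icc (0:ℝ) 1, a x = a 0 + ∫ t in (0:ℝ)..x, a' t
  ftc_b : ∀ x ∈ Set.Icc (0:ℝ) 1, b x = b 0 + ∫ t in (0:ℝ)..x, b' t
  cb_nonneg : ∀ᵐ x ∂(volume.restrict (Set.Ioo (0:ℝ) 1)), 0 ≤ c x - b' x / 2

/-- The bilinear form B(u,v) = ∫₀¹ (a u' v' + b u' v + c u v) dx. -/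
def Coeffs.B (P : Coeffs) (u v : H1) : ℝ :=
  ∫ t in (0:ℝ)..1,
    (P.a t * u.dval t * v.dval t + P.b t * u.dval t * v.val t + P.c t * u.val t * v.val t)

/-- The right-hand side functional (f, v) = ∫₀¹ f v dx. -/
def ip (f : ℝ → ℝ) (v : H1) : ℝ := ∫ t in (0:ℝ)..1, f t * v.val t

/-- `u ∈ H¹₀(Ω)` is the weak solution: B(u,v) = (f,v) for all v ∈ H¹₀(Ω). -/
def Coeffs.IsWeakSolution (P : Coeffs) (f : ℝ → ℝ) (u : H1) : Prop :=
  u.val 0 = 0 ∧ u.val 1 = 0 ∧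
    ∀ v : H1, v.val 0 = 0 → v.val 1 = 0 → P.B u v = ip f v

/-- A mesh of N elements of Ω = (0,1): 0 = x₀ < x₁ < ⋯ < x_N = 1. -/
structure Mesh (N : ℕ) where
  x : ℕ → ℝ
  x_zero : x 0 = 0
  x_last : x N = 1
  x_mono : ∀ i < N, x i < x (i+1)

/-- Element length (the element of index `i` is `(x i, x (i+1))`, `0 ≤ i < N`). -/
def Mesh.h {N : ℕ} (m : Mesh N) (i : ℕ) : ℝ := m.x (i+1) - m.x i

/-- `v` is piecewise linear with respect to the mesh: its derivative is constant
inside each element. -/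
def Mesh.IsPL {N : ℕ} (m : Mesh N) (v : H1) : Prop :=
  ∀ i < N, ∃ s : ℝ, ∀ t ∈ Set.Ioo (m.x i) (m.x (i+1)), v.dval t = s

/-- `uh` is the linear finite element solution on the mesh `m`:
a continuous piecewise linear function vanishing at 0 and 1 with
B(u_h, v_h) = (f, v_h) for all piecewise linear v_h vanishing at 0 and 1. -/
def Coeffs.IsFESolution (P : Coeffs) (f : ℝ → ℝ) {N : ℕ} (m : Mesh N) (uh : H1) : Prop :=
  uh.val 0 = 0 ∧ uh.val 1 = 0 ∧ m.IsPL uh ∧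
    ∀ v : H1, v.val 0 = 0 → v.val 1 = 0 → m.IsPL v → P.B uh v = ip f v

/-- The residual of `w`: r = f + a' w' − b w' − c w. -/
def Coeffs.res (P : Coeffs) (f : ℝ → ℝ) (w : H1) : ℝ → ℝ :=
  fun t => f t + P.a' t * w.dval t - P.b t * w.dval t - P.c t * w.val t

/-- The element L² average ⟨g⟩_i = (h_i⁻¹ ∫_{K_i} g²)^{1/2}. -/
def Mesh.avg {N : ℕ} (m : Mesh N) (g : ℝ → ℝ) (i : ℕ) : ℝ :=
  Real.sqrt ((1 / m.h i) * ∫ t in (m.x i)..(m.x (i+1)), (g t)^2)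

/-- The intensity parameter α_h = (Σ_i h_i ⟨g⟩_i^{2/3})³. -/
def Mesh.alpha {N : ℕ} (m : Mesh N) (g : ℝ → ℝ) : ℝ :=
  (∑ i ∈ Finset.range N, m.h i * (m.avg g i) ^ ((2:ℝ)/3)) ^ 3

/-- The adaptation function value ρ_i = (1 + α_h⁻¹ ⟨g⟩_i²)^{1/3}. -/
def Mesh.rho {N : ℕ} (m : Mesh N) (g : ℝ → ℝ) (i : ℕ) : ℝ :=
  (1 + (m.alpha g)⁻¹ * (m.avg g i)^2) ^ ((1:ℝ)/3)

/-- σ_h = Σ_i ρ_i h_i. -/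
def Mesh.sigma {N : ℕ} (m : Mesh N) (g : ℝ → ℝ) : ℝ :=
  ∑ i ∈ Finset.range N, m.rho g i * m.h i

/-- The mesh equidistributes (the piecewise constant adaptation function built from) `g`:
ρ_i h_i = σ_h / N for all elements. -/
def Mesh.IsEquidistributing {N : ℕ} (m : Mesh N) (g : ℝ → ℝ) : Prop :=
  ∀ i < N, m.rho g i * m.h i = m.sigma g / (N:ℝ)

/-- Membership in the mesh set S_N: 1/(ρ₀ N) ≤ h_i ≤ 2/N for all i. -/
def Mesh.InS {N : ℕ} (m : Mesh N) (ρ0 : ℝ) : Prop :=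
  ∀ i < N, 1 / (ρ0 * (N:ℝ)) ≤ m.h i ∧ m.h i ≤ 2 / (N:ℝ)

/-- The maximum norm distance ‖X − X̃‖_∞ between two meshes with the same N. -/
def meshDist {N : ℕ} (m m' : Mesh N) : ℝ :=
  (Finset.range (N+1)).sup' (Finset.nonempty_range_iff.mpr (Nat.succ_ne_zero N))
    (fun i => |m.x i - m'.x i|)

/-- The energy norm squared ‖v‖_E² = ∫₀¹ (a v'² + (c − b'/2) v²) dx. -/
def Coeffs.energySq (P : Coeffs) (v : H1) : ℝ :=
  ∫ t in (0:ℝ)..1, (P.a t * (v.dval t)^2 + (P.c t - P.b' t / 2) * (v.val t)^2)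

/-- `F` is on [0,1] the indefinite integral of the integrable function `f`. -/
def IsPrimitive (F f : ℝ → ℝ) : Prop :=
  IntervalIntegrable f volume 0 1 ∧ ∀ x ∈ Set.Icc (0:ℝ) 1, F x = F 0 + ∫ t in (0:ℝ)..x, f t

lemma intervalIntegrable_of_unit {f : ℝ → ℝ} (hf : IntervalIntegrable f volume 0 1) {p q : ℝ}
    (hp : p ∈ Set.Icc (0:ℝ) 1) (hq : q ∈ Set.Icc (0:ℝ) 1) : IntervalIntegrable f volume p q := by
  apply hf.mono_set
  rw [Set.uIcc_of_le zero_le_one]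
  exact Set.uIcc_subset_Icc hp hq

namespace IsPrimitive

variable {F G f g : ℝ → ℝ}

lemma sub_eq (hF : IsPrimitive F f) {p q : ℝ}
    (hp : p ∈ Set.Icc (0:ℝ) 1) (hq : q ∈ Set.Icc (0:ℝ) 1) :
    F q - F p = ∫ t in p..q, f t := by
  have h0 : (0:ℝ) ∈ Set.Icc (0:ℝ) 1 := by simp
  rw [hF.2 q hq, hF.2 p hp, ← intervalIntegral.integral_interval_sub_left
    (intervalIntegrable_of_unit hF.1 h0 hq) (intervalIntegrable_of_unit hF.1 h0 hp)]
  ring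

lemma continuousOn (hF : IsPrimitive F f) : ContinuousOn F (Set.Icc 0 1) := by
  have h := intervalIntegral.continuousOn_primitive_interval' hF.1 Set.left_mem_uIcc
  rw [Set.uIcc_of_le zero_le_one] at h
  exact (continuousOn_const.add h).congr hF.2

lemma mul (hF : IsPrimitive F f) (hG : IsPrimitive G g) :
    IsPrimitive (fun t => F t * G t) (fun t => f t * G t + F t * g t) := by
  have hFc : ContinuousOn F (Set.uIcc 0 1) := by
    rw [Set.uIcc_of_le zero_le_one]; exact hF.continuousOn
  have hGc : ContinuousOn G (Set.uIcc 0 1) := by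
    rw [Set.uIcc_of_le zero_le_one]; exact hG.continuousOn
  refine ⟨(hF.1.mul_continuousOn hGc).add (hG.1.continuousOn_mul hFc), fun x hx => ?_⟩
  have h0 : (0:ℝ) ∈ Set.Icc (0:ℝ) 1 := by simp
  have key : ∀ {H h : ℝ → ℝ}, IsPrimitive H h →
      AbsolutelyContinuousOnInterval (fun y => H 0 + ∫ t in (0:ℝ)..y, h t) 0 x ∧
      ∀ᵐ y, y ∈ Set.uIcc 0 x → HasDerivAt (fun y => H 0 + ∫ t in (0:ℝ)..y, h t) (h y) y := by
    intro H h hH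
    have hi := intervalIntegrable_of_unit hH.1 h0 hx
    refine ⟨?_, ?_⟩
    · have hconst : AbsolutelyContinuousOnInterval (fun _ : ℝ => H 0) 0 x :=
        (LipschitzWith.const (H 0)).lipschitzOnWith.absolutelyContinuousOnInterval
      exact hconst.fun_add (hi.absolutelyContinuousOnInterval_intervalIntegral Set.left_mem_uIcc)
    · filter_upwards [hi.ae_hasDerivAt_integral] with y hy hy'
      exact (hy hy' 0 Set.left_mem_uIcc).const_add _
  obtain ⟨hFa, hFd⟩ := key hF
  obtain ⟨hGa, hGd⟩ := key hG
  have h := (hFa.fun_mul hGa).integral_deriv_eq_sub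
  have hint : (∫ y in (0:ℝ)..x, (f y * G y + F y * g y)) = ∫ y in (0:ℝ)..x,
      deriv (fun y => (F 0 + ∫ t in (0:ℝ)..y, f t) * (G 0 + ∫ t in (0:ℝ)..y, g t)) y := by
    apply intervalIntegral.integral_congr_ae
    filter_upwards [hFd, hGd] with y hy1 hy2 hy
    have hy' := Set.uIoc_subset_uIcc hy
    rw [((hy1 hy').fun_mul (hy2 hy')).deriv]
    have hy'' : y ∈ Set.Icc (0:ℝ) 1 := Set.uIcc_subset_Icc h0 hx hy'
    rw [← hF.2 y hy'', ← hG.2 y hy'']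
  rw [hint, h, ← hF.2 x hx, ← hG.2 x hx]
  simp

lemma memLp_top (hF : IsPrimitive F f) : MemLp F ⊤ (volume.restrict (Set.Ioc (0:ℝ) 1)) := by
  obtain ⟨M, hM⟩ := isCompact_Icc.exists_bound_of_continuousOn hF.continuousOn
  refine memLp_top_of_bound ((hF.continuousOn.mono Set.Ioc_subset_Icc_self).aestronglyMeasurable
    measurableSet_Ioc) M ?_
  filter_upwards [ae_restrict_mem measurableSet_Ioc] with x hx
  exact hM x (Set.Ioc_subset_Icc_self hx)

end IsPrimitive

lemma memLp_top_of_ae_bound {g : ℝ → ℝ} (hg : Measurable g)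
    (hb : ∃ M : ℝ, ∀ᵐ x ∂(volume.restrict (Set.Ioo (0:ℝ) 1)), |g x| ≤ M) :
    MemLp g ⊤ (volume.restrict (Set.Ioc (0:ℝ) 1)) := by
  obtain ⟨M, hM⟩ := hb
  rw [restrict_Ioo_eq_restrict_Ioc] at hM
  exact memLp_top_of_bound hg.aestronglyMeasurable M hM

lemma memLp_two_of_sq {g : ℝ → ℝ} (hg : Measurable g)
    (hi : IntervalIntegrable (fun t => (g t)^2) volume 0 1) :
    MemLp g 2 (volume.restrict (Set.Ioc (0:ℝ) 1)) := by
  rw [memLp_two_iff_integrable_sq hg.aestronglyMeasurable]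
  exact (intervalIntegrable_iff_integrableOn_Ioc_of_le zero_le_one).1 hi

lemma intervalIntegrable_mul {f g : ℝ → ℝ} (hf : MemLp f 2 (volume.restrict (Set.Ioc (0:ℝ) 1)))
    (hg : MemLp g 2 (volume.restrict (Set.Ioc (0:ℝ) 1))) :
    IntervalIntegrable (fun t => f t * g t) volume 0 1 :=
  (intervalIntegrable_iff_integrableOn_Ioc_of_le zero_le_one).2 (hf.integrable_mul hg)

lemma intervalIntegrable_sq {f : ℝ → ℝ} (hf : MemLp f 2 (volume.restrict (Set.Ioc (0:ℝ) 1))) :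
    IntervalIntegrable (fun t => f t ^ 2) volume 0 1 := by
  simpa only [sq] using intervalIntegrable_mul hf hf

/-- The variance identity on an interval. -/
lemma integral_sub_average_sq {g : ℝ → ℝ} {p q : ℝ} (hpq : p < q)
    (h1 : IntervalIntegrable g volume p q)
    (h2 : IntervalIntegrable (fun t => g t ^ 2) volume p q) :
    ∫ t in p..q, (g t - (∫ s in p..q, g s) / (q - p)) ^ 2 =
      (∫ t in p..q, g t ^ 2) - (∫ t in p..q, g t) ^ 2 / (q - p) := by
  set I := ∫ s in p..q, g s
  have hL : q - p ≠ 0 := (sub_pos.2 hpq).ne'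
  have : ∀ t, (g t - I / (q - p)) ^ 2 = g t ^ 2 - (2 * (I / (q - p))) * g t + (I / (q - p)) ^ 2 :=
    fun t => by ring
  simp_rw [this]
  rw [intervalIntegral.integral_add (h2.sub (h1.const_mul _)) (by simp),
    intervalIntegral.integral_sub h2 (h1.const_mul _), intervalIntegral.integral_const_mul,
    intervalIntegral.integral_const]
  change _ - _ * I + _ = _
  simp only [smul_eq_mul]
  field_simp
  ring

lemma sq_integral_le {g : ℝ → ℝ} {p q : ℝ} (hpq : p ≤ q)
    (h1 : IntervalIntegrable g volume p q)
    (h2 : IntervalIntegrable (fun t => g t ^ 2) volume p q) :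
    (∫ t in p..q, g t) ^ 2 ≤ (q - p) * ∫ t in p..q, g t ^ 2 := by
  rcases hpq.eq_or_lt with rfl | hlt
  · simp
  have h := integral_sub_average_sq hlt h1 h2
  have h0 : 0 ≤ ∫ t in p..q, (g t - (∫ s in p..q, g s) / (q - p)) ^ 2 :=
    intervalIntegral.integral_nonneg hpq fun t _ => sq_nonneg _
  rw [h, sub_nonneg, div_le_iff₀ (sub_pos.2 hlt)] at h0
  linarith

/-- Poincaré's inequality for a function that vanishes at the left end of the interval. -/
lemma IsPrimitive.integral_sq_le {F f : ℝ → ℝ} (hF : IsPrimitive F f)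
    (hf : IntervalIntegrable (fun t => f t ^ 2) volume 0 1) {p q : ℝ} (hpq : p ≤ q)
    (hp : p ∈ Set.Icc (0:ℝ) 1) (hq : q ∈ Set.Icc (0:ℝ) 1) (h0 : F p = 0) :
    ∫ t in p..q, F t ^ 2 ≤ (q - p) ^ 2 * ∫ t in p..q, f t ^ 2 := by
  have hb : ∀ x ∈ Set.Icc p q, F x ^ 2 ≤ (q - p) * ∫ t in p..q, f t ^ 2 := by
    intro x hx
    have hx' : x ∈ Set.Icc (0:ℝ) 1 := ⟨hp.1.trans hx.1, hx.2.trans hq.2⟩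
    have h := hF.sub_eq hp hx'
    rw [h0, sub_zero] at h
    rw [h]
    refine (sq_integral_le hx.1 (intervalIntegrable_of_unit hF.1 hp hx')
      (intervalIntegrable_of_unit hf hp hx')).trans ?_
    have hmono : ∫ t in p..x, f t ^ 2 ≤ ∫ t in p..q, f t ^ 2 :=
      intervalIntegral.integral_mono_interval le_rfl hx.1 hx.2
        (Filter.Eventually.of_forall fun t => sq_nonneg _) (intervalIntegrable_of_unit hf hp hq)
    have hn : 0 ≤ ∫ t in p..x, f t ^ 2 :=
      intervalIntegral.integral_nonneg hx.1 fun t _ => sq_nonneg _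
    have := hx.2
    gcongr
  have hFc : ContinuousOn (fun t => F t ^ 2) (Set.uIcc p q) :=
    (hF.continuousOn.mono (Set.uIcc_subset_Icc hp hq)).pow 2
  have h := intervalIntegral.integral_mono_on (μ := volume) hpq hFc.intervalIntegrable
    (intervalIntegrable_const (c := (q - p) * ∫ t in p..q, f t ^ 2)) hb
  rw [intervalIntegral.integral_const, smul_eq_mul] at h
  linarith

namespace H1

lemma isPrimitive (v : H1) : IsPrimitive v.val v.dval := ⟨v.dval_int, v.ftc⟩

lemma memLp_val (v : H1) : MemLp v.val ⊤ (volume.restrict (Set.Ioc (0:ℝ) 1)) :=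
  v.isPrimitive.memLp_top

lemma memLp_dval (v : H1) : MemLp v.dval 2 (volume.restrict (Set.Ioc (0:ℝ) 1)) :=
  memLp_two_of_sq v.dval_meas v.dval_sq_int

/-- The difference of two functions in H¹(0,1). -/
def sub (u v : H1) : H1 where
  val t := u.val t - v.val t
  dval t := u.dval t - v.dval t
  dval_meas := u.dval_meas.sub v.dval_meas
  dval_int := u.dval_int.sub v.dval_int
  dval_sq_int := intervalIntegrable_sq (u.memLp_dval.sub v.memLp_dval)
  ftc x hx := by
    have h0 : (0:ℝ) ∈ Set.Icc (0:ℝ) 1 := by simp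
    rw [intervalIntegral.integral_sub (intervalIntegrable_of_unit u.dval_int h0 hx)
      (intervalIntegrable_of_unit v.dval_int h0 hx), u.ftc x hx, v.ftc x hx]
    ring

end H1

namespace Coeffs

lemma a_isPrimitive (P : Coeffs) : IsPrimitive P.a P.a' := ⟨P.a'_int, P.ftc_a⟩

lemma b_isPrimitive (P : Coeffs) : IsPrimitive P.b P.b' := ⟨P.b'_int, P.ftc_b⟩

lemma intervalIntegrable_B (P : Coeffs) (u v : H1) :
    IntervalIntegrable (fun t => P.a t * u.dval t * v.dval t + P.b t * u.dval t * v.val t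
      + P.c t * u.val t * v.val t) volume 0 1 := by
  have ha : MemLp (fun t => P.a t * u.dval t) 2 (volume.restrict (Set.Ioc (0:ℝ) 1)) :=
    u.memLp_dval.mul' P.a_isPrimitive.memLp_top
  have hb : MemLp (fun t => P.b t * u.dval t) 2 (volume.restrict (Set.Ioc (0:ℝ) 1)) :=
    u.memLp_dval.mul' P.b_isPrimitive.memLp_top
  have hc : MemLp (fun t => P.c t * u.val t) 2 (volume.restrict (Set.Ioc (0:ℝ) 1)) :=
    (u.memLp_val.mono_exponent (p := 2) le_top).mul' (memLp_top_of_ae_bound P.c_meas P.c_bdd)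
  have hv := v.memLp_val.mono_exponent (p := 2) le_top
  exact ((intervalIntegrable_mul ha v.memLp_dval).add (intervalIntegrable_mul hb hv)).add
    (intervalIntegrable_mul hc hv)

lemma B_sub_left (P : Coeffs) (u v w : H1) : P.B (u.sub v) w = P.B u w - P.B v w := by
  unfold B
  rw [← intervalIntegral.integral_sub (P.intervalIntegrable_B u w) (P.intervalIntegrable_B v w)]
  congr 1; ext t; simp only [H1.sub]; ring

lemma B_sub_right (P : Coeffs) (u v w : H1) : P.B u (v.sub w) = P.B u v - P.B u w := by
  unfold B
  rw [← intervalIntegral.integral_sub (P.intervalIntegrable_B u v) (P.intervalIntegrable_B u w)]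
  congr 1; ext t; simp only [H1.sub]; ring

/-- The bilinear form is coercive on H¹₀(0,1). -/
lemma a0_mul_le_B (P : Coeffs) (v : H1) (h0 : v.val 0 = 0) (h1 : v.val 1 = 0) :
    P.a0 * (∫ t in (0:ℝ)..1, v.dval t ^ 2) ≤ P.B v v := by
  have hprim := P.b_isPrimitive.mul (v.isPrimitive.mul v.isPrimitive)
  have hz : ∫ t in (0:ℝ)..1, (P.b' t * (v.val t * v.val t)
      + P.b t * (v.dval t * v.val t + v.val t * v.dval t)) = 0 := by
    rw [← hprim.sub_eq (by simp) (by simp)]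
    simp [h0, h1]
  have hBz : P.B v v = P.B v v - 1 / 2 * ∫ t in (0:ℝ)..1, (P.b' t * (v.val t * v.val t)
      + P.b t * (v.dval t * v.val t + v.val t * v.dval t)) := by rw [hz]; ring
  rw [hBz, B, ← intervalIntegral.integral_const_mul, ← intervalIntegral.integral_const_mul,
    ← intervalIntegral.integral_sub (P.intervalIntegrable_B v v) (hprim.1.const_mul _)]
  refine intervalIntegral.integral_mono_ae_restrict zero_le_one (v.dval_sq_int.const_mul _)
    ((P.intervalIntegrable_B v v).sub (hprim.1.const_mul _)) ?_
  have hcb := P.cb_nonneg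
  rw [restrict_Ioo_eq_restrict_Icc] at hcb
  filter_upwards [hcb, ae_restrict_mem measurableSet_Icc] with t ht htm
  have := mul_nonneg (sub_nonneg.2 (P.a_lb t htm)) (sq_nonneg (v.dval t))
  have := mul_nonneg ht (sq_nonneg (v.val t))
  linarith

end Coeffs

lemma intervalIntegrable_ip {f : ℝ → ℝ} (hf : MemL2 f) (v : H1) :
    IntervalIntegrable (fun t => f t * v.val t) volume 0 1 :=
  intervalIntegrable_mul (memLp_two_of_sq hf.1 hf.2) (v.memLp_val.mono_exponent le_top)

lemma ip_sub {f : ℝ → ℝ} (hf : MemL2 f) (v w : H1) : ip f (v.sub w) = ip f v - ip f w := by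
  unfold ip
  rw [← intervalIntegral.integral_sub (intervalIntegrable_ip hf v) (intervalIntegrable_ip hf w)]
  congr 1; ext t; simp only [H1.sub]; ring

lemma Coeffs.memLp_res (P : Coeffs) {f : ℝ → ℝ} (hf : MemL2 f) (w : H1) :
    MemLp (P.res f w) 2 (volume.restrict (Set.Ioc (0:ℝ) 1)) := by
  have ha : MemLp (fun t => P.a' t * w.dval t) 2 (volume.restrict (Set.Ioc (0:ℝ) 1)) :=
    w.memLp_dval.mul' (memLp_top_of_ae_bound P.a'_meas P.a'_bdd)
  have hb : MemLp (fun t => P.b t * w.dval t) 2 (volume.restrict (Set.Ioc (0:ℝ) 1)) :=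
    w.memLp_dval.mul' P.b_isPrimitive.memLp_top
  have hc : MemLp (fun t => P.c t * w.val t) 2 (volume.restrict (Set.Ioc (0:ℝ) 1)) :=
    (w.memLp_val.mono_exponent (p := 2) le_top).mul' (memLp_top_of_ae_bound P.c_meas P.c_bdd)
  exact (((memLp_two_of_sq hf.1 hf.2).add ha).sub hb).sub hc

/-- Elementwise integration by parts: on an interval at whose ends `w` vanishes, and on which `v`
is linear, the weak residual of `v` is represented by the strong one. -/
lemma Coeffs.integral_weak_residual (P : Coeffs) {f : ℝ → ℝ} (hf : MemL2 f) (v w : H1) {p q s : ℝ}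
    (hpq : p ≤ q) (hp : p ∈ Set.Icc (0:ℝ) 1) (hq : q ∈ Set.Icc (0:ℝ) 1)
    (hs : ∀ t ∈ Set.Ioo p q, v.dval t = s) (hwp : w.val p = 0) (hwq : w.val q = 0) :
    ∫ t in p..q, (f t * w.val t - (P.a t * v.dval t * w.dval t + P.b t * v.dval t * w.val t
      + P.c t * v.val t * w.val t)) = ∫ t in p..q, P.res f v t * w.val t := by
  have hprim := P.a_isPrimitive.mul w.isPrimitive
  have hz := hprim.sub_eq hp hq
  simp only [hwp, hwq, mul_zero, sub_zero] at hz
  have hint := intervalIntegrable_of_unit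
    (intervalIntegrable_mul (P.memLp_res hf v) (w.memLp_val.mono_exponent le_top)) hp hq
  have hR : ∫ t in p..q, P.res f v t * w.val t = ∫ t in p..q, (P.res f v t * w.val t
      - s * (P.a' t * w.val t + P.a t * w.dval t)) := by
    rw [intervalIntegral.integral_sub hint
      ((intervalIntegrable_of_unit hprim.1 hp hq).const_mul s),
      intervalIntegral.integral_const_mul, ← hz]
    ring
  rw [hR, intervalIntegral.integral_of_le hpq, intervalIntegral.integral_of_le hpq,
    integral_Ioc_eq_integral_Ioo, integral_Ioc_eq_integral_Ioo]
  refine setIntegral_congr_fun measurableSet_Ioo fun t ht => ?_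
  simp only [res, hs t ht]
  ring

namespace Mesh

variable {N : ℕ}

lemma x_le (m : Mesh N) {i j : ℕ} (hij : i ≤ j) (hj : j ≤ N) : m.x i ≤ m.x j := by
  induction j, hij using Nat.le_induction with
  | base => exact le_rfl
  | succ k _ ih => exact (ih (by omega)).trans (m.x_mono k (by omega)).le

lemma x_mem (m : Mesh N) {i : ℕ} (hi : i ≤ N) : m.x i ∈ Set.Icc (0:ℝ) 1 :=
  ⟨m.x_zero ▸ m.x_le (Nat.zero_le i) hi, m.x_last ▸ m.x_le hi le_rfl⟩

lemma sum_integral (m : Mesh N) {g : ℝ → ℝ} (hg : IntervalIntegrable g volume 0 1) :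
    ∑ i ∈ Finset.range N, ∫ t in (m.x i)..(m.x (i+1)), g t = ∫ t in (0:ℝ)..1, g t := by
  rw [intervalIntegral.sum_integral_adjacent_intervals fun k hk =>
    intervalIntegrable_of_unit hg (m.x_mem hk.le) (m.x_mem hk), m.x_zero, m.x_last]

/-- The derivative of the piecewise linear function with slope `s i` on the element `i`. -/
def slopes (m : Mesh N) (s : ℕ → ℝ) (t : ℝ) : ℝ :=
  ∑ i ∈ Finset.range N, (Set.Ioo (m.x i) (m.x (i+1))).indicator (fun _ => s i) t

lemma slopes_eq (m : Mesh N) (s : ℕ → ℝ) {i : ℕ} (hi : i < N) {t : ℝ}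
    (ht : t ∈ Set.Ioo (m.x i) (m.x (i+1))) : m.slopes s t = s i := by
  rw [slopes, Finset.sum_eq_single_of_mem i (Finset.mem_range.2 hi), Set.indicator_of_mem ht]
  intro j hj hji
  rw [Finset.mem_range] at hj
  refine Set.indicator_of_notMem (fun htj => ?_) _
  rcases lt_or_gt_of_ne hji with h | h
  · linarith [m.x_le (show j + 1 ≤ i from h) hi.le, htj.2, ht.1]
  · linarith [m.x_le (show i + 1 ≤ j from h) hj.le, htj.1, ht.2]

lemma measurable_slopes (m : Mesh N) (s : ℕ → ℝ) : Measurable (m.slopes s) :=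
  Finset.measurable_fun_sum _ fun _ _ => measurable_const.indicator measurableSet_Ioo

lemma memLp_slopes (m : Mesh N) (s : ℕ → ℝ) :
    MemLp (m.slopes s) 2 (volume.restrict (Set.Ioc (0:ℝ) 1)) :=
  memLp_finsetSum _ fun i _ => (memLp_const (s i)).indicator measurableSet_Ioo

/-- The piecewise linear interpolant of `v` at the mesh points. -/
def interp (m : Mesh N) (v : H1) : H1 where
  val x := v.val 0 +
    ∫ t in (0:ℝ)..x, m.slopes (fun i => (v.val (m.x (i+1)) - v.val (m.x i)) / m.h i) t
  dval := m.slopes (fun i => (v.val (m.x (i+1)) - v.val (m.x i)) / m.h i)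
  dval_meas := m.measurable_slopes _
  dval_int := (intervalIntegrable_iff_integrableOn_Ioc_of_le zero_le_one).2
    ((m.memLp_slopes _).integrable (by norm_num))
  dval_sq_int := intervalIntegrable_sq (m.memLp_slopes _)
  ftc x _ := by simp

lemma h_pos (m : Mesh N) {i : ℕ} (hi : i < N) : 0 < m.h i := sub_pos.2 (m.x_mono i hi)

lemma interp_dval (m : Mesh N) (v : H1) {i : ℕ} (hi : i < N) {t : ℝ}
    (ht : t ∈ Set.Ioo (m.x i) (m.x (i+1))) :
    (m.interp v).dval t = (v.val (m.x (i+1)) - v.val (m.x i)) / m.h i :=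
  m.slopes_eq _ hi ht

lemma interp_isPL (m : Mesh N) (v : H1) : m.IsPL (m.interp v) :=
  fun _ hi => ⟨_, fun _ ht => m.interp_dval v hi ht⟩

lemma interp_val (m : Mesh N) (v : H1) {i : ℕ} (hi : i ≤ N) :
    (m.interp v).val (m.x i) = v.val (m.x i) := by
  induction i with
  | zero => rw [m.x_zero]; simp [interp]
  | succ k ih =>
    have hk : k < N := hi
    have h := (m.interp v).isPrimitive.sub_eq (m.x_mem hk.le) (m.x_mem hk)
    rw [ih hk.le, intervalIntegral.integral_of_le (m.x_mono k hk).le, integral_Ioc_eq_integral_Ioo,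
      setIntegral_congr_fun measurableSet_Ioo (fun t ht => m.interp_dval v hk ht),
      ← integral_Ioc_eq_integral_Ioo, ← intervalIntegral.integral_of_le (m.x_mono k hk).le,
      intervalIntegral.integral_const, smul_eq_mul] at h
    have hne := (m.h_pos hk).ne'
    change _ = m.h k * _ at h
    rw [mul_div_cancel₀ _ hne] at h
    linarith

/-- On every element the interpolation error has a smaller H¹ seminorm than the function. -/
lemma integral_interp_error_le (m : Mesh N) (v : H1) {i : ℕ} (hi : i < N) :
    ∫ t in (m.x i)..(m.x (i+1)), (v.sub (m.interp v)).dval t ^ 2 ≤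
      ∫ t in (m.x i)..(m.x (i+1)), v.dval t ^ 2 := by
  have hx := m.x_mono i hi
  have hv := integral_sub_average_sq hx
    (intervalIntegrable_of_unit v.dval_int (m.x_mem hi.le) (m.x_mem hi))
    (intervalIntegrable_of_unit v.dval_sq_int (m.x_mem hi.le) (m.x_mem hi))
  rw [← v.isPrimitive.sub_eq (m.x_mem hi.le) (m.x_mem hi)] at hv
  have heq : ∫ t in (m.x i)..(m.x (i+1)), (v.sub (m.interp v)).dval t ^ 2 =
      ∫ t in (m.x i)..(m.x (i+1)),
        (v.dval t - (v.val (m.x (i+1)) - v.val (m.x i)) / (m.x (i+1) - m.x i)) ^ 2 := by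
    rw [intervalIntegral.integral_of_le hx.le, intervalIntegral.integral_of_le hx.le,
      integral_Ioc_eq_integral_Ioo, integral_Ioc_eq_integral_Ioo]
    refine setIntegral_congr_fun measurableSet_Ioo fun t ht => ?_
    simp only [H1.sub, m.interp_dval v hi ht, h]
  rw [heq, hv, sub_le_self_iff]
  exact div_nonneg (sq_nonneg _) (sub_pos.2 hx).le

/-- The elementwise L² interpolation error is at most the element length times the H¹ seminorm. -/
lemma integral_interp_error_val_le (m : Mesh N) (v : H1) {i : ℕ} (hi : i < N) :
    ∫ t in (m.x i)..(m.x (i+1)), (v.sub (m.interp v)).val t ^ 2 ≤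
      m.h i ^ 2 * ∫ t in (m.x i)..(m.x (i+1)), v.dval t ^ 2 := by
  have h := (v.sub (m.interp v)).isPrimitive.integral_sq_le (v.sub (m.interp v)).dval_sq_int
    (m.x_mono i hi).le (m.x_mem hi.le) (m.x_mem hi)
    (by simp only [H1.sub, m.interp_val v hi.le, sub_self])
  exact h.trans (mul_le_mul_of_nonneg_left (m.integral_interp_error_le v hi) (sq_nonneg _))

end Mesh

/-- Young's inequality for the elementwise pairing of the residual with an interpolation error. -/
lemma integral_mul_le_young {r w : ℝ → ℝ} {p q k : ℝ} (hpq : p ≤ q) (hk : 0 < k)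
    (hr : IntervalIntegrable (fun t => r t ^ 2) volume p q)
    (hw : IntervalIntegrable (fun t => w t ^ 2) volume p q)
    (hrw : IntervalIntegrable (fun t => r t * w t) volume p q) :
    ∫ t in p..q, r t * w t ≤
      k / 2 * (∫ t in p..q, r t ^ 2) + 1 / (2 * k) * ∫ t in p..q, w t ^ 2 := by
  rw [← intervalIntegral.integral_const_mul, ← intervalIntegral.integral_const_mul,
    ← intervalIntegral.integral_add (hr.const_mul _) (hw.const_mul _)]
  refine intervalIntegral.integral_mono_on hpq hrw ((hr.const_mul _).add (hw.const_mul _))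
    fun t _ => ?_
  have h : k / 2 * r t ^ 2 + 1 / (2 * k) * w t ^ 2 - r t * w t = (k * r t - w t) ^ 2 / (2 * k) := by
    field_simp
    ring
  have : 0 ≤ (k * r t - w t) ^ 2 / (2 * k) := by positivity
  linarith

/-- the residual-based a posteriori error estimate (Lemma 3.5). -/
theorem statement8 (P : Coeffs) :
    ∃ C : ℝ, 0 < C ∧
      ∀ f : ℝ → ℝ, MemL2 f →
      ∀ u : H1, P.IsWeakSolution f u →
      ∀ (N : ℕ) (m : Mesh N) (uh : H1), P.IsFESolution f m uh →
        (L2 (fun t => u.dval t - uh.dval t))^2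
          ≤ C * ∑ i ∈ Finset.range N,
              (m.h i)^2 * ∫ t in (m.x i)..(m.x (i+1)), (P.res f uh t)^2 := by
  have ha := P.a0_pos
  refine ⟨1 / P.a0 ^ 2, by positivity, fun f hf u hu N m uh huh => ?_⟩
  obtain ⟨hu0, hu1, hweak⟩ := hu
  obtain ⟨huh0, huh1, hPL, hgal⟩ := huh
  set e := u.sub uh with he
  set w := e.sub (m.interp e) with hw
  have he0 : e.val 0 = 0 := by simp [he, H1.sub, hu0, huh0]
  have he1 : e.val 1 = 0 := by simp [he, H1.sub, hu1, huh1]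
  have hnode : ∀ i ≤ N, w.val (m.x i) = 0 := fun i hi => by
    simp only [hw, H1.sub, sub_eq_zero]
    exact (m.interp_val e hi).symm
  have hI0 : (m.interp e).val 0 = 0 := by
    have := m.interp_val e (Nat.zero_le N)
    rwa [m.x_zero, he0] at this
  have hI1 : (m.interp e).val 1 = 0 := by
    have := m.interp_val e le_rfl
    rwa [m.x_last, he1] at this
  have hBe : P.B e e = ip f w - P.B uh w := by
    rw [hw, ip_sub hf, P.B_sub_right uh, hgal _ hI0 hI1 (m.interp_isPL e), ← hweak e he0 he1,
      sub_sub_sub_cancel_right, ← P.B_sub_left]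
  have hsum : ip f w - P.B uh w =
      ∑ i ∈ Finset.range N, ∫ t in (m.x i)..(m.x (i+1)), P.res f uh t * w.val t := by
    rw [ip, Coeffs.B, ← intervalIntegral.integral_sub (intervalIntegrable_ip hf w)
      (P.intervalIntegrable_B uh w), ← m.sum_integral
      ((intervalIntegrable_ip hf w).sub (P.intervalIntegrable_B uh w))]
    refine Finset.sum_congr rfl fun i hi => ?_
    rw [Finset.mem_range] at hi
    obtain ⟨s, hs⟩ := hPL i hi
    exact P.integral_weak_residual hf uh w (m.x_mono i hi).le (m.x_mem hi.le) (m.x_mem hi) hs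
      (hnode i hi.le) (hnode (i+1) hi)
  have hwL2 := w.memLp_val.mono_exponent (p := 2) le_top
  have hres := P.memLp_res hf uh
  have hle : ∑ i ∈ Finset.range N, ∫ t in (m.x i)..(m.x (i+1)), P.res f uh t * w.val t ≤
      ∑ i ∈ Finset.range N,
        (1 / (2 * P.a0) * ((m.h i)^2 * ∫ t in (m.x i)..(m.x (i+1)), (P.res f uh t)^2)
          + P.a0 / 2 * ∫ t in (m.x i)..(m.x (i+1)), e.dval t ^ 2) := by
    refine Finset.sum_le_sum fun i hi => ?_
    rw [Finset.mem_range] at hi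
    have hh := m.h_pos hi
    have hk : 0 < (m.h i) ^ 2 / P.a0 := by positivity
    have hint : ∀ {g : ℝ → ℝ}, IntervalIntegrable g volume 0 1 →
        IntervalIntegrable g volume (m.x i) (m.x (i+1)) :=
      fun hg => intervalIntegrable_of_unit hg (m.x_mem hi.le) (m.x_mem hi)
    refine (integral_mul_le_young (m.x_mono i hi).le hk (hint (intervalIntegrable_sq hres))
      (hint (intervalIntegrable_sq hwL2)) (hint (intervalIntegrable_mul hres hwL2))).trans ?_
    have hwe := mul_le_mul_of_nonneg_left (m.integral_interp_error_val_le e hi)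
      (show 0 ≤ 1 / (2 * ((m.h i) ^ 2 / P.a0)) by positivity)
    refine (add_le_add_right hwe _).trans (le_of_eq ?_)
    field_simp
  rw [Finset.sum_add_distrib, ← Finset.mul_sum, ← Finset.mul_sum,
    m.sum_integral e.dval_sq_int] at hle
  have hcoer := P.a0_mul_le_B e he0 he1
  rw [hBe, hsum] at hcoer
  have hL2 : (L2 (fun t => u.dval t - uh.dval t)) ^ 2 = ∫ t in (0:ℝ)..1, e.dval t ^ 2 :=
    Real.sq_sqrt (intervalIntegral.integral_nonneg zero_le_one fun t _ => sq_nonneg _)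
  rw [hL2]
  have h := hcoer.trans hle
  set E := ∫ t in (0:ℝ)..1, e.dval t ^ 2
  set S := ∑ i ∈ Finset.range N,
    (m.h i)^2 * ∫ t in (m.x i)..(m.x (i+1)), (P.res f uh t)^2
  have h2 : P.a0 / 2 * E ≤ 1 / (2 * P.a0) * S := by linarith
  have h3 := mul_le_mul_of_nonneg_left h2 (show 0 ≤ 2 / P.a0 by positivity)
  calc E = 2 / P.a0 * (P.a0 / 2 * E) := by field_simp
    _ ≤ 2 / P.a0 * (1 / (2 * P.a0) * S) := h3
    _ = 1 / P.a0 ^ 2 * S := by field_simp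

end EquidMesh
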